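/- Let L be a real symmetric positive semidefinite n×n matrix whose kernel is exactly the span of the all-ones vector 𝟙, let a ≠ b be indices, and set v = e_a − e_b. Let M be the Moore–Penrose pseudoinverse of L and M' the Moore–Penrose pseudoinverse of L + v·vᵀ. Then ∑_{1 ≤ x < y ≤ n} [(M_{xx} + M_{yy} − 2·M_{xy}) − (M'_{xx} + M'_{yy} − 2·M'_{xy})] = n·‖M·v‖² / (1 + vᵀ·M·v). -/

import Mathlib

open Matrix Finset

/-- `M` is the Moore–Penrose pseudoinverse of `L`. -/
def IsMoorePenroseInv {n : ℕ} (L M : Matrix (Fin n) (Fin n) ℝ) : Prop :=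
  L * M * L = L ∧ M * L * M = M ∧ (L * M)ᵀ = L * M ∧ (M * L)ᵀ = M * L

theorem mp_unique {n : ℕ} {L M N : Matrix (Fin n) (Fin n) ℝ}
    (hM : IsMoorePenroseInv L M) (hN : IsMoorePenroseInv L N) : M = N := by
  obtain ⟨m1, m2, m3, m4⟩ := hM
  obtain ⟨n1, n2, n3, n4⟩ := hN
  have h1 : L * M = L * N := by
    calc L * M = (L * M)ᵀ := m3.symm
      _ = ((L * N) * (L * M))ᵀ := by rw [← Matrix.mul_assoc (L * N), n1]
      _ = (L * M) * (L * N) := by rw [Matrix.transpose_mul, m3, n3]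
      _ = L * N := by rw [← Matrix.mul_assoc (L * M), m1]
  have h2 : M * L = N * L := by
    calc M * L = (M * L)ᵀ := m4.symm
      _ = ((M * L) * (N * L))ᵀ := by
          rw [Matrix.mul_assoc M, ← Matrix.mul_assoc L, n1]
      _ = (N * L) * (M * L) := by rw [Matrix.transpose_mul, m4, n4]
      _ = N * L := by rw [Matrix.mul_assoc N, ← Matrix.mul_assoc L, m1]
  calc M = M * L * M := m2.symm
    _ = N * (L * M) := by rw [h2, Matrix.mul_assoc]
    _ = N * L * N := by rw [h1, Matrix.mul_assoc]
    _ = N := n2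

theorem sum_lt_sq {n : ℕ} (u : Fin n → ℝ) (hu : ∑ i, u i = 0) :
    ∑ p ∈ Finset.univ.filter (fun p : Fin n × Fin n => p.1 < p.2), (u p.1 - u p.2) ^ 2
      = n * ∑ i, u i ^ 2 := by
  have hall : ∑ p : Fin n × Fin n, (u p.1 - u p.2) ^ 2 = 2 * (n * ∑ i, u i ^ 2) := by
    rw [Fintype.sum_prod_type]
    have : ∀ x, ∑ y, (u x - u y) ^ 2 = n * u x ^ 2 + ∑ y, u y ^ 2 := by
      intro x
      have : ∀ y, (u x - u y) ^ 2 = u x ^ 2 + u y ^ 2 - 2 * u x * u y := fun y => by ring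
      simp only [this, Finset.sum_sub_distrib, Finset.sum_add_distrib, ← Finset.mul_sum, hu]
      simp
    simp only [this, Finset.sum_add_distrib, ← Finset.mul_sum]
    simp
    ring
  have hsplit : ∑ p : Fin n × Fin n, (u p.1 - u p.2) ^ 2 =
      ∑ p ∈ Finset.univ.filter (fun p : Fin n × Fin n => p.1 < p.2), (u p.1 - u p.2) ^ 2 +
      ∑ p ∈ Finset.univ.filter (fun p : Fin n × Fin n => p.2 < p.1), (u p.1 - u p.2) ^ 2 := by
    rw [Finset.sum_filter, Finset.sum_filter, ← Finset.sum_add_distrib]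
    refine Finset.sum_congr rfl fun p _ => ?_
    rcases lt_trichotomy p.1 p.2 with h | h | h
    · simp [h, h.not_gt]
    · simp [h]
    · simp [h, h.not_gt]
  have hswap : ∑ p ∈ Finset.univ.filter (fun p : Fin n × Fin n => p.2 < p.1), (u p.1 - u p.2) ^ 2
      = ∑ p ∈ Finset.univ.filter (fun p : Fin n × Fin n => p.1 < p.2), (u p.1 - u p.2) ^ 2 := by
    rw [Finset.sum_filter, Finset.sum_filter]
    rw [← Equiv.sum_comp (Equiv.prodComm (Fin n) (Fin n))]
    refine Finset.sum_congr rfl fun p _ => ?_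
    simp only [Equiv.prodComm_apply, Prod.fst_swap, Prod.snd_swap]
    rw [sub_sq_comm]
    rfl
  linarith

theorem gain_formula {n : ℕ}
    (L : Matrix (Fin n) (Fin n) ℝ) (hL : L.PosSemidef)
    (hker : ∀ x : Fin n → ℝ,
      L.mulVec x = 0 ↔ ∃ c : ℝ, x = c • (fun _ => (1 : ℝ)))
    (a b : Fin n) (hab : a ≠ b)
    (v : Fin n → ℝ) (hv : v = Pi.single a 1 - Pi.single b 1)
    (M M' : Matrix (Fin n) (Fin n) ℝ)
    (hM : IsMoorePenroseInv L M)
    (hM' : IsMoorePenroseInv (L + vecMulVec v v) M') :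
    ∑ p ∈ Finset.univ.filter (fun p : Fin n × Fin n => p.1 < p.2),
        ((M p.1 p.1 + M p.2 p.2 - 2 * M p.1 p.2) -
          (M' p.1 p.1 + M' p.2 p.2 - 2 * M' p.1 p.2)) =
      (n : ℝ) * (∑ i, (M.mulVec v i) ^ 2) / (1 + v ⬝ᵥ M.mulVec v) := by
  have hLt : Lᵀ = L := by simpa using hL.isHermitian.eq
  have hMt : Mᵀ = M := by
    obtain ⟨m1, m2, m3, m4⟩ := hM
    refine mp_unique (L := L) ⟨?_, ?_, ?_, ?_⟩ ⟨m1, m2, m3, m4⟩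
    · have := congrArg Matrix.transpose m1
      simpa [Matrix.transpose_mul, hLt, Matrix.mul_assoc] using this
    · have := congrArg Matrix.transpose m2
      simpa [Matrix.transpose_mul, hLt, Matrix.mul_assoc] using this
    · have := m4
      simp only [Matrix.transpose_mul, hLt, Matrix.transpose_transpose] at this ⊢
      exact this.symm
    · have := m3
      simp only [Matrix.transpose_mul, hLt, Matrix.transpose_transpose] at this ⊢
      exact this.symm
  obtain ⟨m1, m2, m3, m4⟩ := hM
  have hcomm : L * M = M * L := by
    rw [← m3, Matrix.transpose_mul, hLt, hMt]
  set one : Fin n → ℝ := fun _ => 1 with hone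
  have hL1 : L *ᵥ one = 0 := (hker one).2 ⟨1, by simp⟩
  have hM1 : M *ᵥ one = 0 := by
    rw [← m2, Matrix.mul_assoc, hcomm, ← Matrix.mulVec_mulVec, ← Matrix.mulVec_mulVec, hL1]
    simp
  have hv1 : one ⬝ᵥ v = 0 := by
    rw [hv, dotProduct_sub]; simp [hone]
  have hone1 : one ⬝ᵥ one = n := by simp [hone, dotProduct]
  have hn : (n : ℝ) ≠ 0 := by
    have : 0 < n := a.pos
    positivity
  set u := M *ᵥ v with hu
  have h1u : one ⬝ᵥ u = 0 := by
    rw [hu, Matrix.dotProduct_mulVec, ← Matrix.mulVec_transpose, hMt, hM1]; simp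
  have hLu : L *ᵥ u = v := by
    have hk : L *ᵥ (v - L *ᵥ u) = 0 := by
      rw [Matrix.mulVec_sub, hu, Matrix.mulVec_mulVec, Matrix.mulVec_mulVec, Matrix.mul_assoc, hcomm,
        ← Matrix.mul_assoc, m1, sub_self]
    obtain ⟨c, hc⟩ := (hker _).1 hk
    have h2 : one ⬝ᵥ (v - L *ᵥ u) = 0 := by
      rw [dotProduct_sub, hv1, Matrix.dotProduct_mulVec, ← Matrix.mulVec_transpose, hLt, hL1]
      simp
    rw [hc, dotProduct_smul, hone1, smul_eq_mul] at h2
    have hc0 : c = 0 := by simpa [hn] using h2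
    rw [hc0, zero_smul] at hc
    exact (sub_eq_zero.1 hc).symm
  have hr : 0 ≤ v ⬝ᵥ u := by
    have := hL.dotProduct_mulVec_nonneg u
    rw [hLu, dotProduct_comm] at this
    simpa using this
  set r := v ⬝ᵥ u with hrdef
  have hr1 : 1 + r ≠ 0 := by positivity
  have hvM : v ᵥ* M = u := by rw [← Matrix.mulVec_transpose, hMt]
  have key : M' = M - (1 + r)⁻¹ • vecMulVec u u := by
    have hNt : (M - (1 + r)⁻¹ • vecMulVec u u)ᵀ = M - (1 + r)⁻¹ • vecMulVec u u := by
      simp [hMt, Matrix.transpose_vecMulVec]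
    have hL't : (L + vecMulVec v v)ᵀ = L + vecMulVec v v := by
      simp [hLt, Matrix.transpose_vecMulVec]
    have e1 : (L + vecMulVec v v) * (M - (1 + r)⁻¹ • vecMulVec u u) = L * M := by
      rw [Matrix.add_mul, Matrix.mul_sub, Matrix.mul_sub, Matrix.mul_smul, Matrix.mul_smul,
        Matrix.mul_vecMulVec, hLu, Matrix.vecMulVec_mul, hvM, Matrix.vecMulVec_mul_vecMulVec,
        ← hrdef]
      ext i j
      simp [vecMulVec_apply]
      field_simp
      ring
    have e2 : (M - (1 + r)⁻¹ • vecMulVec u u) * (L + vecMulVec v v) = L * M := by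
      have := congrArg Matrix.transpose e1
      rwa [Matrix.transpose_mul, hNt, hL't, m3] at this
    refine mp_unique hM' ⟨?_, ?_, ?_, ?_⟩
    · rw [e1, Matrix.mul_add, m1, Matrix.mul_vecMulVec, ← Matrix.mulVec_mulVec, ← hu, hLu]
    · rw [e2, Matrix.mul_sub, Matrix.mul_smul, Matrix.mul_vecMulVec, hcomm, m2,
        ← Matrix.mulVec_mulVec, hLu]
    · rw [e1, m3]
    · rw [e2, m3]
  have hs : ∑ i, u i = 0 := by simpa [hone, dotProduct] using h1u
  rw [mul_div_right_comm, div_mul_eq_mul_div, ← sum_lt_sq u hs, div_eq_mul_inv, Finset.sum_mul]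
  refine Finset.sum_congr rfl fun p _ => ?_
  rw [key]
  simp [vecMulVec_apply]
  ring
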